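/- Let R be a unital complex *-algebra and let A and B be unital *-subalgebras of R such that every element of A commutes with every element of B. Let ω be a state on R for which there exists a sequence (ωₙ) of states on R, each of which is a finite convex combination of product states relative to A and B, such that ωₙ(r) converges to ω(r) for every r ∈ R. Then ω has the Verch–Werner ppt property relative to A and B: for every N ∈ ℕ and all families x : Fin N → A and y : Fin N → B, the sum ∑_{j,k} ω((x k) * star (x j) * star (y j) * (y k)) is a nonnegative real number. -/

import Mathlib

open scoped ComplexOrder

/-- A state on a unital complex `*`-algebra: a `ℂ`-linear functional sending `1` to `1`
and `star a * a` to a nonnegative real number (using the partial order on `ℂ`,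
where `0 ≤ z` means `z` is real and nonnegative). -/
def IsState {A : Type*} [Ring A] [StarRing A] [Algebra ℂ A]
    (ω : A →ₗ[ℂ] ℂ) : Prop :=
  ω 1 = 1 ∧ ∀ a : A, 0 ≤ ω (star a * a)

/-- A state on `R` is a product state relative to commuting unital `*`-subalgebras
`A` and `B` if it factorises on products of elements of `A` and `B`. -/
def IsProductState {R : Type*} [Ring R] [StarRing R] [Algebra ℂ R] [StarModule ℂ R]
    (A B : StarSubalgebra ℂ R) (ω : R →ₗ[ℂ] ℂ) : Prop :=
  IsState ω ∧ ∀ a ∈ A, ∀ b ∈ B, ω (a * b) = ω a * ω b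

/-- A state is Hermitian. -/
theorem IsState.map_star {R : Type*} [Ring R] [StarRing R] [Algebra ℂ R] [StarModule ℂ R]
    {ω : R →ₗ[ℂ] ℂ} (hω : IsState ω) (r : R) : ω (star r) = star (ω r) := by
  have hr := (Complex.nonneg_iff.mp (hω.2 r)).2
  have h₁ := (Complex.nonneg_iff.mp (hω.2 (1 + r))).2
  have h₂ := (Complex.nonneg_iff.mp (hω.2 (1 + Complex.I • r))).2
  simp [mul_add, add_mul, smul_smul, hω.1] at h₁ h₂
  apply Complex.ext
  · simp
    linarith
  · simp
    linarith

/-- The Gram matrix of a finite family with respect to a state is positive semidefinite. -/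
theorem IsState.posSemidef_gram {R : Type*} [Ring R] [StarRing R] [Algebra ℂ R]
    [StarModule ℂ R] {ω : R →ₗ[ℂ] ℂ} (hω : IsState ω) {ι : Type*} [Fintype ι] (a : ι → R) :
    (Matrix.of fun j k => ω (star (a j) * a k)).PosSemidef := by
  refine Matrix.posSemidef_iff_dotProduct_mulVec.mpr ⟨?_, fun c => ?_⟩
  · ext j k
    rw [Matrix.conjTranspose_apply, Matrix.of_apply, Matrix.of_apply, ← hω.map_star, star_mul,
      star_star]
  · convert hω.2 (∑ k, c k • a k) using 1
    rw [star_sum, Finset.sum_mul_sum]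
    simp only [dotProduct, Matrix.mulVec, Matrix.of_apply, Pi.star_apply, star_smul,
      Finset.mul_sum, map_sum, smul_mul_smul_comm, map_smul, smul_eq_mul]
    refine Finset.sum_congr rfl fun j _ => Finset.sum_congr rfl fun k _ => ?_
    ring

/-- A product state has the Verch-Werner ppt property. -/
theorem IsProductState.ppt {R : Type*} [Ring R] [StarRing R] [Algebra ℂ R] [StarModule ℂ R]
    {A B : StarSubalgebra ℂ R} {ω : R →ₗ[ℂ] ℂ} (hω : IsProductState A B ω)
    {ι : Type*} [Fintype ι] (x : ι → A) (y : ι → B) :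
    0 ≤ ∑ j, ∑ k, ω ((x k : R) * star (x j : R) * star (y j : R) * (y k : R)) := by
  have hP := (hω.1.posSemidef_gram fun j => star (x j : R)).transpose
  have hQ := hω.1.posSemidef_gram fun j => (y j : R)
  convert (hP.hadamard hQ).dotProduct_mulVec_nonneg (fun _ => 1) using 1
  simp only [dotProduct, Matrix.mulVec, Pi.star_apply, star_one, one_mul, mul_one,
    Matrix.hadamard_apply, Matrix.transpose_apply, Matrix.of_apply, star_star]
  refine Finset.sum_congr rfl fun j _ => Finset.sum_congr rfl fun k _ => ?_
  rw [mul_assoc _ (star (y j : R)), hω.2 _ (mul_mem (x k).2 (star_mem (x j).2)) _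
    (mul_mem (star_mem (y j).2) (y k).2)]

/-- Every classically correlated state, i.e. every pointwise limit of finite convex
combinations of product states relative to commuting unital `*`-subalgebras `A`, `B` of `R`,
has the Verch-Werner ppt property. -/
theorem classically_correlated_verch_werner_ppt
    {R : Type*} [Ring R] [StarRing R] [Algebra ℂ R] [StarModule ℂ R]
    (A B : StarSubalgebra ℂ R)
    (hcomm : ∀ a ∈ A, ∀ b ∈ B, a * b = b * a)
    (ω : R →ₗ[ℂ] ℂ) (hω : IsState ω)
    (ωs : ℕ → (R →ₗ[ℂ] ℂ))
    (hstates : ∀ n, IsState (ωs n))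
    (hconv : ∀ n, ∃ (m : ℕ) (lam : Fin m → ℝ) (μ : Fin m → (R →ₗ[ℂ] ℂ)),
      (∀ j, 0 < lam j) ∧ (∑ j, lam j = 1) ∧
      (∀ j, IsProductState A B (μ j)) ∧
      ωs n = ∑ j, (lam j : ℂ) • μ j)
    (hlim : ∀ r : R, Filter.Tendsto (fun n => ωs n r) Filter.atTop (nhds (ω r)))
    (N : ℕ) (x : Fin N → A) (y : Fin N → B) :
    0 ≤ ∑ j : Fin N, ∑ k : Fin N,
      ω ((x k : R) * star (x j : R) * star (y j : R) * (y k : R)) := by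
  refine ge_of_tendsto' (tendsto_finsetSum _ fun j _ => tendsto_finsetSum _ fun k _ => hlim _)
    fun n => ?_
  obtain ⟨m, lam, μ, hlam, -, hμ, h⟩ := hconv n
  have hsum : 0 ≤ ∑ i, (lam i : ℂ) * ∑ j, ∑ k,
      μ i ((x k : R) * star (x j : R) * star (y j : R) * (y k : R)) :=
    Finset.sum_nonneg fun i _ =>
      mul_nonneg (Complex.zero_le_real.mpr (hlam i).le) ((hμ i).ppt x y)
  convert hsum using 1
  simp only [h, LinearMap.sum_apply, LinearMap.smul_apply, smul_eq_mul, Finset.mul_sum]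
  rw [Finset.sum_comm (s := (Finset.univ : Finset (Fin m)))]
  exact Finset.sum_congr rfl fun j _ => Finset.sum_comm
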